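/- arXiv:1501.04817 — 2 statements merged into one kernel-verified Lean document; each statement's English description precedes it below -/
import Mathlib

section
/- Let Φ ∈ ℝ^{m×n} have restricted isometry constant δ_{K+1} < 1/(√K + 1), let x ∈ ℝ^n be K-sparse with support T = supp(x), |T| = K ≥ 1, and let y = Φx + v with v ≠ 0. If √SNR > 2√K(1 + δ_{K+1}) / ((1 − (√K + 1)δ_{K+1}) · √MAR), then every run of OMP applied to (Φ, y) satisfies T^K = T, i.e., OMP exactly recovers the support of x in K iterations. -/
noncomputable section
open Finset

/-- `Vec n` is `ℝ^n` with the Euclidean (ℓ²) norm. -/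
abbrev Vec (n : ℕ) := EuclideanSpace ℝ (Fin n)

/-- The standard inner product `⟨u, v⟩ = ∑ i, u i * v i`. -/
def dot {n : ℕ} (u v : Vec n) : ℝ := ∑ i, u i * v i

/-- The `j`-th column of a matrix, as a Euclidean vector. -/
def col {m n : ℕ} (Φ : Matrix (Fin m) (Fin n) ℝ) (j : Fin n) : Vec m :=
  WithLp.toLp 2 fun i => Φ i j

/-- Matrix-vector multiplication `Φ x`, valued in Euclidean space. -/
def mulVec' {m n : ℕ} (Φ : Matrix (Fin m) (Fin n) ℝ) (x : Vec n) : Vec m :=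
  WithLp.toLp 2 fun i => ∑ j, Φ i j * x j

/-- The support of a vector, as a `Finset`. -/
def suppF {n : ℕ} (x : Vec n) : Finset (Fin n) :=
  Finset.univ.filter fun i => x i ≠ 0

/-- Restriction of a vector to an index set (zero outside the set). -/
def restrict {n : ℕ} (x : Vec n) (S : Finset (Fin n)) : Vec n :=
  WithLp.toLp 2 fun i => if i ∈ S then x i else 0

/-- `RIPConst Φ L δ` : δ is the restricted isometry constant of `Φ` of order `L`,
i.e. the smallest `c ≥ 0` such that `(1-c)‖u‖² ≤ ‖Φu‖² ≤ (1+c)‖u‖²` for all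
`L`-sparse `u`. -/
def RIPConst {m n : ℕ} (Φ : Matrix (Fin m) (Fin n) ℝ) (L : ℕ) (δ : ℝ) : Prop :=
  IsLeast {c : ℝ | 0 ≤ c ∧ ∀ u : Vec n, (suppF u).card ≤ L →
    (1 - c) * ‖u‖ ^ 2 ≤ ‖mulVec' Φ u‖ ^ 2 ∧ ‖mulVec' Φ u‖ ^ 2 ≤ (1 + c) * ‖u‖ ^ 2} δ

/-- Signal-to-noise ratio `‖Φx‖²/‖v‖²`. -/
def SNR {m n : ℕ} (Φ : Matrix (Fin m) (Fin n) ℝ) (x : Vec n) (v : Vec m) : ℝ :=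
  ‖mulVec' Φ x‖ ^ 2 / ‖v‖ ^ 2

/-- A run of `N` iterations of Orthogonal Matching Pursuit on data `(Φ, y)`:
`idx (k+1) = t^{k+1}` is the index selected at iteration `k+1`, `sets k = T^k`,
`est k = x^k` and `res k = r^k`. -/
structure OMPRun {m n : ℕ} (Φ : Matrix (Fin m) (Fin n) ℝ) (y : Vec m) (N : ℕ) where
  idx : ℕ → Fin n
  sets : ℕ → Finset (Fin n)
  est : ℕ → Vec n
  res : ℕ → Vec m
  sets_zero : sets 0 = ∅
  est_zero : est 0 = 0
  res_zero : res 0 = y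
  idx_not_mem : ∀ k < N, idx (k + 1) ∉ sets k
  idx_max : ∀ k < N, ∀ i : Fin n, i ∉ sets k →
    |dot (col Φ i) (res k)| ≤ |dot (col Φ (idx (k + 1))) (res k)|
  sets_succ : ∀ k < N, sets (k + 1) = insert (idx (k + 1)) (sets k)
  est_supp : ∀ k < N, suppF (est (k + 1)) ⊆ sets (k + 1)
  est_min : ∀ k < N, ∀ u : Vec n, suppF u ⊆ sets (k + 1) →
    ‖y - mulVec' Φ (est (k + 1))‖ ≤ ‖y - mulVec' Φ u‖
  res_succ : ∀ k < N, res (k + 1) = y - mulVec' Φ (est (k + 1))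

/-- The vector `Φᵀ w` restricted to an index set `A` (the vector of correlations
`⟨φ_i, w⟩` for `i ∈ A`, zero outside `A`), as a Euclidean vector. -/
def colDots {m n : ℕ} (Φ : Matrix (Fin m) (Fin n) ℝ) (A : Finset (Fin n)) (w : Vec m) : Vec n :=
  WithLp.toLp 2 fun i => if i ∈ A then dot (col Φ i) w else 0

/-- The vector `Φᵀ w` of all column correlations, as a plain function (so `‖·‖`
is the sup/ℓ∞ norm). -/
def dualVec {m n : ℕ} (Φ : Matrix (Fin m) (Fin n) ℝ) (w : Vec m) : Fin n → ℝ :=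
  fun i => dot (col Φ i) w

/-- `P⊥_S w` : the projection of `w` onto the orthogonal complement of the span
of the columns of `Φ` indexed by `S`. -/
def perpProj {m n : ℕ} (Φ : Matrix (Fin m) (Fin n) ℝ) (S : Finset (Fin n)) (w : Vec m) : Vec m :=
  w - (Submodule.orthogonalProjectionOnto (Submodule.span ℝ (col Φ '' (S : Set (Fin n)))) w : Vec m)

/-- The `j`-th largest value (1-indexed) among `{|x i| : i ∈ Γ}` (with
multiplicities); `0` if `j > |Γ|` or `j = 0`. -/
def kthLargest {n : ℕ} (x : Vec n) (Γ : Finset (Fin n)) (j : ℕ) : ℝ :=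
  if 1 ≤ j ∧ j ≤ Γ.card then
    (Multiset.sort (Γ.val.map fun i => |x i|) (· ≤ ·)).getD (Γ.card - j) 0
  else 0

/-!
Write `P` for the projection onto the orthogonal complement of the atoms selected so far, a proper
subset `S` of the support `T`. The current residual is `P y = P (Φ x) + P v`, and `P (Φ x) = Φ z`
for some `z` supported on `T` that agrees with `x` off `S`. Since `Φ z` is orthogonal to the atoms
of `S`, the restricted isometry property bounds `(1 - δ) ‖z‖` by the `ℓ²` norm of the correlations
`⟪φ_i, Φ z⟫` with `i ∈ T \ S`, hence by `√#(T \ S)` times the largest of them, whereas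
`|⟪φ_j, Φ z⟫| ≤ δ ‖z‖` for every `j ∉ T`. The noise changes each correlation by at most
`√(1 + δ) ‖v‖`, while `‖z‖ ≥ √#(T \ S) μ` with `μ` the smallest magnitude of the entries of `x` on
`T`. Hence no index outside `T` can be selected as long as
`2 √(1 + δ) ‖v‖ < μ (1 - (√K + 1) δ)`, and this is what the bound on the signal-to-noise ratio says
after `‖Φ x‖ ≤ √(1 + δ) ‖x‖`.
-/

open scoped RealInnerProductSpace

section Dictionary

variable {ι E : Type*} [NormedAddCommGroup E] [InnerProductSpace ℝ E] {φ : ι → E} {S T : Finset ι}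

/-- The restricted isometry property of order `L` with constant `δ`, for a family `φ` of atoms in an
inner product space. An `L`-sparse vector is encoded as a coefficient function `a` together with a
finite set `S` of at most `L` indices; the values of `a` outside `S` are ignored. -/
structure HasRIP (φ : ι → E) (L : ℕ) (δ : ℝ) : Prop where
  nonneg : 0 ≤ δ
  le_norm_sq : ∀ (S : Finset ι) (a : ι → ℝ), #S ≤ L →
    (1 - δ) * ∑ i ∈ S, a i ^ 2 ≤ ‖∑ i ∈ S, a i • φ i‖ ^ 2
  norm_sq_le : ∀ (S : Finset ι) (a : ι → ℝ), #S ≤ L →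
    ‖∑ i ∈ S, a i • φ i‖ ^ 2 ≤ (1 + δ) * ∑ i ∈ S, a i ^ 2

namespace HasRIP

variable {L : ℕ} {δ : ℝ}

lemma norm_le (h : HasRIP φ L δ) (hL : 1 ≤ L) (i : ι) : ‖φ i‖ ≤ √(1 + δ) :=
  Real.le_sqrt_of_sq_le <| by simpa using h.norm_sq_le {i} 1 (by simpa using hL)

lemma norm_add_sq_mem_Icc (h : HasRIP φ L δ) (hST : Disjoint S T) (hL : #S + #T ≤ L)
    (a b : ι → ℝ) :
    ‖∑ i ∈ S, a i • φ i + ∑ i ∈ T, b i • φ i‖ ^ 2 ∈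
      Set.Icc ((1 - δ) * (∑ i ∈ S, a i ^ 2 + ∑ i ∈ T, b i ^ 2))
        ((1 + δ) * (∑ i ∈ S, a i ^ 2 + ∑ i ∈ T, b i ^ 2)) := by
  classical
  set c : ι → ℝ := fun i => if i ∈ S then a i else b i
  have hcard : #(S ∪ T) ≤ L := (card_union_of_disjoint hST).trans_le hL
  have hS : ∀ i ∈ S, c i = a i := fun i hi => if_pos hi
  have hT : ∀ i ∈ T, c i = b i := fun i hi => if_neg (disjoint_right.1 hST hi)
  have hsq : ∑ i ∈ S ∪ T, c i ^ 2 = ∑ i ∈ S, a i ^ 2 + ∑ i ∈ T, b i ^ 2 := by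
    rw [sum_union hST, sum_congr rfl fun i hi => by rw [hS i hi],
      sum_congr (s₁ := T) rfl fun i hi => by rw [hT i hi]]
  have hsmul : ∑ i ∈ S ∪ T, c i • φ i = ∑ i ∈ S, a i • φ i + ∑ i ∈ T, b i • φ i := by
    rw [sum_union hST, sum_congr rfl fun i hi => by rw [hS i hi],
      sum_congr (s₁ := T) rfl fun i hi => by rw [hT i hi]]
  rw [← hsq, ← hsmul]
  exact ⟨h.le_norm_sq _ c hcard, h.norm_sq_le _ c hcard⟩

lemma abs_inner_le (h : HasRIP φ L δ) (hST : Disjoint S T) (hL : #S + #T ≤ L) (a b : ι → ℝ) :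
    |⟪∑ i ∈ S, a i • φ i, ∑ i ∈ T, b i • φ i⟫| ≤
      δ * (√(∑ i ∈ S, a i ^ 2) * √(∑ i ∈ T, b i ^ 2)) := by
  set f := ∑ i ∈ S, a i • φ i
  set g := ∑ i ∈ T, b i • φ i
  set A := ∑ i ∈ S, a i ^ 2
  set B := ∑ i ∈ T, b i ^ 2
  have hA : 0 ≤ A := sum_nonneg fun i _ => sq_nonneg _
  have hB : 0 ≤ B := sum_nonneg fun i _ => sq_nonneg _
  have hbounds (t : ℝ) : ‖t • f + g‖ ^ 2 ∈
      Set.Icc ((1 - δ) * (t ^ 2 * A + B)) ((1 + δ) * (t ^ 2 * A + B)) := by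
    simpa only [Pi.smul_apply, smul_eq_mul, mul_smul, mul_pow, ← smul_sum, ← mul_sum] using
      h.norm_add_sq_mem_Icc hST hL (t • a) b
  -- Polarization: `‖t f + g‖² - ‖-t f + g‖² = 4 t ⟪f, g⟫`.
  have hquad (t : ℝ) : 0 ≤ δ * A * (t * t) + -2 * ⟪f, g⟫ * t + δ * B := by
    have hpos := (hbounds t).2
    have hneg := (hbounds (-t)).1
    rw [norm_add_sq_real, norm_smul, Real.norm_eq_abs, mul_pow, sq_abs, inner_smul_left,
      RCLike.conj_to_real] at hpos hneg
    linarith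
  have hdiscrim := discrim_le_zero hquad
  refine abs_le_of_sq_le_sq ?_ (mul_nonneg h.nonneg (by positivity))
  rw [mul_pow, mul_pow, Real.sq_sqrt hA, Real.sq_sqrt hB]
  rw [discrim] at hdiscrim
  linarith

lemma abs_inner_atom_le {j : ι} (h : HasRIP φ L δ) (hj : j ∉ T) (hL : #T + 1 ≤ L) (b : ι → ℝ) :
    |⟪φ j, ∑ i ∈ T, b i • φ i⟫| ≤ δ * √(∑ i ∈ T, b i ^ 2) := by
  simpa using h.abs_inner_le (disjoint_singleton_left.2 hj) (by simpa [add_comm] using hL) 1 b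

end HasRIP

lemma norm_sq_sum_smul_le_of_inner_eq_zero [DecidableEq ι] (z : ι → ℝ)
    (horth : ∀ i ∈ S, ⟪φ i, ∑ j ∈ T, z j • φ j⟫ = 0) :
    ‖∑ j ∈ T, z j • φ j‖ ^ 2 ≤
      √(∑ i ∈ T, z i ^ 2) * √(∑ i ∈ T \ S, ⟪φ i, ∑ j ∈ T, z j • φ j⟫ ^ 2) := by
  set g := ∑ j ∈ T, z j • φ j with hg
  calc ‖g‖ ^ 2 = ∑ i ∈ T, z i * ⟪φ i, g⟫ := by
        rw [← real_inner_self_eq_norm_sq]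
        nth_rw 1 [hg]
        simp only [sum_inner, real_inner_smul_left]
    _ = ∑ i ∈ T \ S, z i * ⟪φ i, g⟫ := by
        refine (sum_subset sdiff_subset fun i hiT hi => ?_).symm
        have hiS : i ∈ S := by simpa [hiT] using hi
        rw [horth i hiS, mul_zero]
    _ ≤ √(∑ i ∈ T \ S, z i ^ 2) * √(∑ i ∈ T \ S, ⟪φ i, g⟫ ^ 2) :=
        Real.sum_mul_le_sqrt_mul_sqrt _ _ _
    _ ≤ √(∑ i ∈ T, z i ^ 2) * √(∑ i ∈ T \ S, ⟪φ i, g⟫ ^ 2) := by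
        gcongr
        exact sdiff_subset

lemma HasRIP.mul_sqrt_sum_sq_le [DecidableEq ι] {L : ℕ} {δ : ℝ} (h : HasRIP φ L δ) (hT : #T ≤ L)
    (z : ι → ℝ) (horth : ∀ i ∈ S, ⟪φ i, ∑ j ∈ T, z j • φ j⟫ = 0) :
    (1 - δ) * √(∑ i ∈ T, z i ^ 2) ≤ √(∑ i ∈ T \ S, ⟪φ i, ∑ j ∈ T, z j • φ j⟫ ^ 2) := by
  set Z := √(∑ i ∈ T, z i ^ 2) with hZ
  have hZ_sq : Z ^ 2 = ∑ i ∈ T, z i ^ 2 := Real.sq_sqrt (sum_nonneg fun i _ => sq_nonneg _)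
  obtain hZ_zero | hZ_pos := (Real.sqrt_nonneg (∑ i ∈ T, z i ^ 2)).eq_or_lt
  · rw [hZ, ← hZ_zero, mul_zero]
    positivity
  · refine le_of_mul_le_mul_left ?_ hZ_pos
    calc Z * ((1 - δ) * Z) = (1 - δ) * ∑ i ∈ T, z i ^ 2 := by rw [← hZ_sq]; ring
      _ ≤ ‖∑ j ∈ T, z j • φ j‖ ^ 2 := h.le_norm_sq T z hT
      _ ≤ _ := norm_sq_sum_smul_le_of_inner_eq_zero z horth

lemma sqrt_sum_sq_le_sqrt_card_mul {f : ι → ℝ} {b : ℝ} (hb : 0 ≤ b) (hf : ∀ i ∈ S, |f i| ≤ b) :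
    √(∑ i ∈ S, f i ^ 2) ≤ √(#S) * b := by
  rw [← Real.sqrt_sq hb, ← Real.sqrt_mul (Nat.cast_nonneg _), ← nsmul_eq_mul]
  exact Real.sqrt_le_sqrt <| sum_le_card_nsmul _ _ _ fun i hi =>
    sq_le_sq' (abs_le.1 (hf i hi)).1 (abs_le.1 (hf i hi)).2

lemma sqrt_card_mul_le_sqrt_sum_sq {f : ι → ℝ} {b : ℝ} (hb : 0 ≤ b) (hST : S ⊆ T)
    (hf : ∀ i ∈ S, b ≤ |f i|) : √(#S) * b ≤ √(∑ i ∈ T, f i ^ 2) := by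
  rw [← Real.sqrt_sq hb, ← Real.sqrt_mul (Nat.cast_nonneg _), ← nsmul_eq_mul]
  refine Real.sqrt_le_sqrt ?_
  calc #S • b ^ 2 ≤ ∑ i ∈ S, f i ^ 2 :=
        card_nsmul_le_sum _ _ _ fun i hi => sq_le_sq.2 <| by rw [abs_of_nonneg hb]; exact hf i hi
    _ ≤ ∑ i ∈ T, f i ^ 2 := sum_le_sum_of_subset_of_nonneg hST fun i _ _ => sq_nonneg _

instance finiteDimensional_span_image_finset (φ : ι → E) (S : Finset ι) :
    FiniteDimensional ℝ (Submodule.span ℝ (φ '' S)) :=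
  .span_of_finite ℝ (S.finite_toSet.image φ)

/-- The residual of the least-squares approximation of a vector by the atoms `φ i`, `i ∈ S`: its
projection onto the orthogonal complement of their span. For the columns of a matrix this is the
residual of orthogonal matching pursuit after the selection of the indices in `S`. -/
def leastSquaresResidual (φ : ι → E) (S : Finset ι) : E →L[ℝ] E :=
  (Submodule.span ℝ (φ '' S))ᗮ.starProjection

lemma leastSquaresResidual_apply (φ : ι → E) (S : Finset ι) (w : E) :
    leastSquaresResidual φ S w = w - (Submodule.span ℝ (φ '' S)).starProjection w :=
  Submodule.starProjection_orthogonal_val w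

lemma leastSquaresResidual_empty (φ : ι → E) (w : E) : leastSquaresResidual φ ∅ w = w := by
  simp [leastSquaresResidual_apply]

lemma norm_leastSquaresResidual_le (φ : ι → E) (S : Finset ι) (w : E) :
    ‖leastSquaresResidual φ S w‖ ≤ ‖w‖ :=
  Submodule.norm_starProjection_apply_le _ _

lemma inner_leastSquaresResidual_of_mem {i : ι} (hi : i ∈ S) (w : E) :
    ⟪φ i, leastSquaresResidual φ S w⟫ = 0 :=
  Submodule.inner_right_of_mem_orthogonal (Submodule.subset_span (Set.mem_image_of_mem φ hi))
    (Submodule.starProjection_apply_mem _ _)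

lemma leastSquaresResidual_eq_of_norm_sub_le {w p : E} (hp : p ∈ Submodule.span ℝ (φ '' S))
    (hmin : ∀ q ∈ Submodule.span ℝ (φ '' S), ‖w - p‖ ≤ ‖w - q‖) :
    leastSquaresResidual φ S w = w - p := by
  set U := Submodule.span ℝ (φ '' S)
  have hinf : ‖w - p‖ = ⨅ q : U, ‖w - q‖ :=
    le_antisymm (le_ciInf fun q => hmin q q.2)
      (ciInf_le (f := fun q : U => ‖w - q‖)
        ⟨0, by rintro _ ⟨q, rfl⟩; exact norm_nonneg _⟩ ⟨p, hp⟩)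
  rw [leastSquaresResidual_apply, Submodule.eq_starProjection_of_mem_of_inner_eq_zero hp
    ((U.norm_eq_iInf_iff_real_inner_eq_zero hp).1 hinf)]

lemma exists_leastSquaresResidual_sum_smul_eq (φ : ι → E) (hST : S ⊆ T) (x : ι → ℝ) :
    ∃ z : ι → ℝ, (∀ i ∉ S, z i = x i) ∧
      leastSquaresResidual φ S (∑ i ∈ T, x i • φ i) = ∑ i ∈ T, z i • φ i := by
  classical
  obtain ⟨c, hc⟩ := (Submodule.mem_span_image_finset_iff_exists_fun' ℝ).1
    (Submodule.starProjection_apply_mem (Submodule.span ℝ (φ '' S)) (∑ i ∈ T, x i • φ i))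
  refine ⟨fun i => x i - if i ∈ S then c i else 0, fun i hi => by simp [hi], ?_⟩
  simp only [leastSquaresResidual_apply, ← hc, sub_smul, sum_sub_distrib, ite_smul, zero_smul,
    sum_ite_mem, inter_eq_right.2 hST]

lemma HasRIP.mul_sqrt_sum_sq_le_of_notMem [DecidableEq ι] {L : ℕ} {δ ε : ℝ} {w : E} {j : ι}
    (h : HasRIP φ L δ) (hj : j ∉ T) (hL : #T + 1 ≤ L) (z : ι → ℝ)
    (horth : ∀ i ∈ S, ⟪φ i, ∑ k ∈ T, z k • φ k⟫ = 0) (hw : ∀ i, |⟪φ i, w⟫| ≤ ε)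
    (hmax : ∀ i ∈ T \ S, |⟪φ i, ∑ k ∈ T, z k • φ k + w⟫| ≤ |⟪φ j, ∑ k ∈ T, z k • φ k + w⟫|) :
    (1 - δ) * √(∑ i ∈ T, z i ^ 2) ≤ √(#(T \ S)) * (δ * √(∑ i ∈ T, z i ^ 2) + 2 * ε) := by
  have hδ : 0 ≤ δ := h.nonneg
  have hε : 0 ≤ ε := (abs_nonneg _).trans (hw j)
  have hcorr := h.mul_sqrt_sum_sq_le (Nat.le_of_succ_le hL) z horth
  have hwrong := h.abs_inner_atom_le hj hL z
  set g := ∑ k ∈ T, z k • φ k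
  refine hcorr.trans (sqrt_sum_sq_le_sqrt_card_mul (by positivity) fun i hi => ?_)
  have hij := hmax i hi
  rw [inner_add_right, inner_add_right] at hij
  linarith [abs_add_le ⟪φ j, g⟫ ⟪φ j, w⟫, abs_sub_abs_le_abs_add ⟪φ i, g⟫ ⟪φ i, w⟫, hw i, hw j]

lemma HasRIP.abs_inner_leastSquaresResidual_le {L : ℕ} {δ : ℝ} (h : HasRIP φ L δ) (hL : 1 ≤ L)
    (S : Finset ι) (i : ι) (w : E) : |⟪φ i, leastSquaresResidual φ S w⟫| ≤ √(1 + δ) * ‖w‖ :=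
  (abs_real_inner_le_norm _ _).trans <|
    mul_le_mul (h.norm_le hL i) (norm_leastSquaresResidual_le φ S w) (norm_nonneg _)
      (Real.sqrt_nonneg _)

lemma HasRIP.mem_of_abs_inner_leastSquaresResidual_le {δ μ : ℝ} {x : ι → ℝ} {v : E} {j : ι}
    (h : HasRIP φ (#T + 1) δ) (hST : S ⊂ T) (hδ : (√(#T) + 1) * δ < 1)
    (hμ : ∀ i ∈ T, μ ≤ |x i|) (hnoise : 2 * √(1 + δ) * ‖v‖ < μ * (1 - (√(#T) + 1) * δ))
    (hmax : ∀ i ∈ T, i ∉ S → |⟪φ i, leastSquaresResidual φ S (∑ i ∈ T, x i • φ i + v)⟫| ≤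
      |⟪φ j, leastSquaresResidual φ S (∑ i ∈ T, x i • φ i + v)⟫|) :
    j ∈ T := by
  classical
  by_contra hj
  have hδ_nonneg : 0 ≤ δ := h.nonneg
  obtain ⟨z, hzx, hz⟩ := exists_leastSquaresResidual_sum_smul_eq φ hST.subset x
  rw [map_add, hz] at hmax
  have horth : ∀ i ∈ S, ⟪φ i, ∑ k ∈ T, z k • φ k⟫ = 0 := fun i hi => by
    rw [← hz, inner_leastSquaresResidual_of_mem hi]
  have hupper := h.mul_sqrt_sum_sq_le_of_notMem hj le_rfl z horth
    (fun i => h.abs_inner_leastSquaresResidual_le (Nat.le_add_left 1 _) S i v)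
    fun i hi => hmax i (mem_sdiff.1 hi).1 (mem_sdiff.1 hi).2
  have hμ_pos : 0 < μ :=
    pos_of_mul_pos_left (hnoise.trans_le' (by positivity)) (sub_pos.2 hδ).le
  have hlower : √(#(T \ S)) * μ ≤ √(∑ i ∈ T, z i ^ 2) :=
    sqrt_card_mul_le_sqrt_sum_sq hμ_pos.le sdiff_subset fun i hi =>
      hzx i (mem_sdiff.1 hi).2 ▸ hμ i (mem_sdiff.1 hi).1
  set Z := √(∑ i ∈ T, z i ^ 2)
  set ρ := √(#(T \ S))
  have hρ_pos : 0 < ρ :=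
    Real.sqrt_pos.2 (Nat.cast_pos.2 (card_pos.2 (sdiff_nonempty.2 hST.not_subset)))
  have hρ_le : ρ ≤ √(#T) := Real.sqrt_le_sqrt (Nat.cast_le.2 (card_le_card sdiff_subset))
  have hsignal : ρ * (μ * (1 - (√(#T) + 1) * δ)) ≤ ρ * (2 * √(1 + δ) * ‖v‖) :=
    calc ρ * (μ * (1 - (√(#T) + 1) * δ)) = ρ * μ * (1 - (√(#T) + 1) * δ) := by ring
      _ ≤ Z * (1 - (√(#T) + 1) * δ) := by gcongr
      _ ≤ Z * (1 - (ρ + 1) * δ) := by gcongr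
      _ ≤ ρ * (2 * √(1 + δ) * ‖v‖) := by linarith
  exact (le_of_mul_le_mul_left hsignal hρ_pos).not_gt hnoise

end Dictionary

section Matrix

variable {m n : ℕ} {Φ : Matrix (Fin m) (Fin n) ℝ} {S : Finset (Fin n)} {u : Vec n}

lemma dot_eq_inner (u v : Vec n) : dot u v = ⟪u, v⟫ := by
  simp [dot, PiLp.inner_apply, mul_comm]

lemma mem_suppF {i : Fin n} : i ∈ suppF u ↔ u i ≠ 0 := by
  simp [suppF]

lemma apply_eq_zero_of_suppF_subset (hu : suppF u ⊆ S) {i : Fin n} (hi : i ∉ S) : u i = 0 :=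
  not_not.1 fun h => hi (hu (mem_suppF.2 h))

lemma suppF_restrict_subset (u : Vec n) (S : Finset (Fin n)) : suppF (restrict u S) ⊆ S :=
  fun i hi => by
    by_contra h
    exact mem_suppF.1 hi (if_neg h)

lemma mulVec'_eq_sum_smul_col (Φ : Matrix (Fin m) (Fin n) ℝ) (hu : suppF u ⊆ S) :
    mulVec' Φ u = ∑ j ∈ S, u j • col Φ j := by
  rw [sum_subset (subset_univ S) fun j _ hj => by
    rw [apply_eq_zero_of_suppF_subset hu hj, zero_smul]]
  ext i
  simp [mulVec', col, mul_comm]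

lemma norm_sq_eq_sum_sq (hu : suppF u ⊆ S) : ‖u‖ ^ 2 = ∑ j ∈ S, u j ^ 2 := by
  rw [EuclideanSpace.real_norm_sq_eq, sum_subset (subset_univ S) fun j _ hj => by
    rw [apply_eq_zero_of_suppF_subset hu hj, zero_pow two_ne_zero]]

lemma mulVec'_restrict (Φ : Matrix (Fin m) (Fin n) ℝ) (u : Vec n) (S : Finset (Fin n)) :
    mulVec' Φ (restrict u S) = ∑ j ∈ S, u j • col Φ j := by
  rw [mulVec'_eq_sum_smul_col Φ (suppF_restrict_subset u S)]
  exact sum_congr rfl fun j hj => by simp [_root_.restrict, hj]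

lemma norm_restrict_sq (u : Vec n) (S : Finset (Fin n)) :
    ‖restrict u S‖ ^ 2 = ∑ j ∈ S, u j ^ 2 := by
  rw [norm_sq_eq_sum_sq (suppF_restrict_subset u S)]
  exact sum_congr rfl fun j hj => by simp [_root_.restrict, hj]

lemma mulVec'_mem_span_col (Φ : Matrix (Fin m) (Fin n) ℝ) (hu : suppF u ⊆ S) :
    mulVec' Φ u ∈ Submodule.span ℝ (col Φ '' S) :=
  (Submodule.mem_span_image_finset_iff_exists_fun' ℝ).2 ⟨u, (mulVec'_eq_sum_smul_col Φ hu).symm⟩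

lemma exists_mulVec'_eq_of_mem_span_col {w : Vec m}
    (hw : w ∈ Submodule.span ℝ (col Φ '' S)) : ∃ u, suppF u ⊆ S ∧ mulVec' Φ u = w := by
  obtain ⟨c, rfl⟩ := (Submodule.mem_span_image_finset_iff_exists_fun' ℝ).1 hw
  exact ⟨_, suppF_restrict_subset (WithLp.toLp 2 c) S, mulVec'_restrict Φ _ S⟩

lemma RIPConst.hasRIP {L : ℕ} {δ : ℝ} (h : RIPConst Φ L δ) : HasRIP (col Φ) L δ := by
  have hsparse (S : Finset (Fin n)) (a : Fin n → ℝ) (hS : #S ≤ L) :=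
    h.1.2 (restrict (WithLp.toLp 2 a) S) ((card_le_card (suppF_restrict_subset _ S)).trans hS)
  simp only [norm_restrict_sq, mulVec'_restrict] at hsparse
  exact ⟨h.1.1, fun S a hS => (hsparse S a hS).1, fun S a hS => (hsparse S a hS).2⟩

end Matrix

namespace OMPRun

variable {m n N : ℕ} {Φ : Matrix (Fin m) (Fin n) ℝ} {y : Vec m}

lemma card_sets (run : OMPRun Φ y N) : ∀ k ≤ N, #(run.sets k) = k
  | 0, _ => by rw [run.sets_zero, card_empty]
  | k + 1, hk => by
    rw [run.sets_succ k hk, card_insert_of_notMem (run.idx_not_mem k hk),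
      run.card_sets k (Nat.le_of_succ_le hk)]

lemma res_eq_leastSquaresResidual (run : OMPRun Φ y N) :
    ∀ k ≤ N, run.res k = leastSquaresResidual (col Φ) (run.sets k) y
  | 0, _ => by rw [run.res_zero, run.sets_zero, leastSquaresResidual_empty]
  | k + 1, hk => by
    rw [run.res_succ k hk]
    refine (leastSquaresResidual_eq_of_norm_sub_le
      (mulVec'_mem_span_col Φ (run.est_supp k hk)) fun q hq => ?_).symm
    obtain ⟨u, hu, rfl⟩ := exists_mulVec'_eq_of_mem_span_col hq
    exact run.est_min k hk u hu

variable {δ μ : ℝ} {x : Fin n → ℝ} {v : Vec m} {T : Finset (Fin n)}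

lemma sets_subset_of_noise_lt (run : OMPRun Φ y #T) (hy : y = ∑ i ∈ T, x i • col Φ i + v)
    (hRIP : HasRIP (col Φ) (#T + 1) δ) (hδ : (√(#T) + 1) * δ < 1) (hμ : ∀ i ∈ T, μ ≤ |x i|)
    (hnoise : 2 * √(1 + δ) * ‖v‖ < μ * (1 - (√(#T) + 1) * δ)) :
    ∀ k ≤ #T, run.sets k ⊆ T
  | 0, _ => run.sets_zero ▸ empty_subset T
  | k + 1, hk => by
    have hsub := run.sets_subset_of_noise_lt hy hRIP hδ hμ hnoise k (Nat.le_of_succ_le hk)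
    have hcard := run.card_sets k (Nat.le_of_succ_le hk)
    have hssub : run.sets k ⊂ T := ssubset_of_subset_of_ne hsub fun h => by
      rw [h] at hcard
      omega
    have hres := (run.res_eq_leastSquaresResidual k (Nat.le_of_succ_le hk)).trans
      (congrArg (leastSquaresResidual (col Φ) (run.sets k)) hy)
    rw [run.sets_succ k hk]
    refine insert_subset (hRIP.mem_of_abs_inner_leastSquaresResidual_le hssub hδ hμ hnoise
      fun i _ hi => ?_) hsub
    simpa only [dot_eq_inner, hres] using run.idx_max k hk i hi

theorem sets_eq_of_noise_lt (run : OMPRun Φ y #T) (hy : y = ∑ i ∈ T, x i • col Φ i + v)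
    (hRIP : HasRIP (col Φ) (#T + 1) δ) (hδ : (√(#T) + 1) * δ < 1) (hμ : ∀ i ∈ T, μ ≤ |x i|)
    (hnoise : 2 * √(1 + δ) * ‖v‖ < μ * (1 - (√(#T) + 1) * δ)) :
    run.sets #T = T :=
  eq_of_subset_of_card_le (run.sets_subset_of_noise_lt hy hRIP hδ hμ hnoise _ le_rfl)
    (run.card_sets _ le_rfl).ge

end OMPRun

lemma noise_lt_of_lt_sqrt_SNR {m n K : ℕ} {Φ : Matrix (Fin m) (Fin n) ℝ} {x : Vec n} {v : Vec m}
    {δ a D : ℝ} (hx : x ≠ 0) (hv : v ≠ 0) (hK : 1 ≤ K) (hδ : 0 ≤ δ) (ha : 0 < a) (hD : 0 < D)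
    (hΦx : ‖mulVec' Φ x‖ ^ 2 ≤ (1 + δ) * ‖x‖ ^ 2)
    (hSNR : 2 * √K * (1 + δ) / (D * √(a / (‖x‖ ^ 2 / K))) < √(SNR Φ x v)) :
    2 * √(1 + δ) * ‖v‖ < √a * D := by
  have hx_pos : 0 < ‖x‖ := norm_pos_iff.2 hx
  have hv_pos : 0 < ‖v‖ := norm_pos_iff.2 hv
  have : 0 < √K := Real.sqrt_pos.2 (by exact_mod_cast hK)
  have : 0 < √a := Real.sqrt_pos.2 ha
  have hs_pos : 0 < √(1 + δ) := by positivity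
  have hs_sq : √(1 + δ) ^ 2 = 1 + δ := Real.sq_sqrt (by positivity)
  have hSNR_le : √(SNR Φ x v) ≤ √(1 + δ) * ‖x‖ / ‖v‖ := by
    rw [SNR, Real.sqrt_div (sq_nonneg _), Real.sqrt_sq (norm_nonneg _), Real.sqrt_sq hv_pos.le]
    gcongr
    refine (sq_le_sq₀ (norm_nonneg _) (by positivity)).1 ?_
    rwa [mul_pow, hs_sq]
  have hMAR : √(a / (‖x‖ ^ 2 / K)) = √a * √K / ‖x‖ := by
    rw [Real.sqrt_div ha.le, Real.sqrt_div (sq_nonneg _), Real.sqrt_sq hx_pos.le,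
      div_div_eq_mul_div]
  have hratio : 2 * √(1 + δ) ^ 2 * ‖x‖ / (D * √a) < √(1 + δ) * ‖x‖ / ‖v‖ := by
    refine lt_of_eq_of_lt ?_ (hSNR.trans_le hSNR_le)
    rw [hMAR, hs_sq]
    field_simp
  rw [div_lt_div_iff₀ (by positivity) hv_pos] at hratio
  refine lt_of_mul_lt_mul_left ?_ (mul_pos hs_pos hx_pos).le
  linarith

/-- sufficient SNR condition for exact support recovery with OMP
in `K` iterations. -/
theorem stmt0 {m n K : ℕ} (Φ : Matrix (Fin m) (Fin n) ℝ) (δ : ℝ)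
    (x : Vec n) (v y : Vec m) (T : Finset (Fin n)) (hTne : T.Nonempty)
    (hsupp : suppF x = T) (hcard : T.card = K) (hK1 : 1 ≤ K)
    (hRIP : RIPConst Φ (K + 1) δ) (hδ : δ < 1 / (Real.sqrt K + 1))
    (hv : v ≠ 0) (hy : y = mulVec' Φ x + v)
    (hSNR : Real.sqrt (SNR Φ x v) >
      2 * Real.sqrt K * (1 + δ) /
        ((1 - (Real.sqrt K + 1) * δ) *
          Real.sqrt ((T.inf' hTne fun j => |x j| ^ 2) / (‖x‖ ^ 2 / K))))
    (run : OMPRun Φ y K) :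
    run.sets K = T := by
  subst hcard
  have hne : ∀ i ∈ T, x i ≠ 0 := fun i hi => mem_suppF.1 (hsupp.symm ▸ hi)
  have hx : x ≠ 0 := by
    rintro rfl
    exact hne _ hTne.choose_spec rfl
  have hδ' : (√(#T) + 1) * δ < 1 := by rwa [lt_div_iff₀' (by positivity)] at hδ
  have hmin_pos : 0 < T.inf' hTne fun j => |x j| ^ 2 :=
    (lt_inf'_iff hTne).2 fun i hi => pow_pos (abs_pos.2 (hne i hi)) 2
  have hmin_le : ∀ i ∈ T, √(T.inf' hTne fun j => |x j| ^ 2) ≤ |x i| := fun i hi =>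
    Real.sqrt_le_left (abs_nonneg _) |>.2 (inf'_le _ hi)
  have hΦx : ‖mulVec' Φ x‖ ^ 2 ≤ (1 + δ) * ‖x‖ ^ 2 := (hRIP.1.2 x (by simp [hsupp])).2
  have hnoise := noise_lt_of_lt_sqrt_SNR hx hv hK1 hRIP.1.1 hmin_pos (sub_pos.2 hδ') hΦx hSNR
  rw [mulVec'_eq_sum_smul_col Φ hsupp.subset] at hy
  exact run.sets_eq_of_noise_lt hy hRIP.hasRIP hδ' hmin_le hnoise

end
end

section
/- For every integer K ≥ 1 and every m > K, there exist a matrix Φ ∈ ℝ^{m×m}, a K-sparse signal x ∈ ℝ^m with support T, and a noise vector v ≠ 0 with y = Φx + v, such that √SNR ≤ √K(1 + δ_{K+1}) / ((1 − √K·δ_{K+1}) · √MAR) and there is a run of OMP applied to (Φ, y) whose first selected index satisfies t^1 ∉ T; in particular, exact support recovery in K iterations fails for this run. (Hence the SNR bound √SNR > √K(1+δ_{K+1})/((1−√K δ_{K+1})√MAR) is necessary for the exact support recovery of all K-sparse signals with OMP.) -/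
noncomputable section
open Finset

/-!
Take `Φ = 1`, let `x` be the indicator vector of a set `T` of `K` indices and let `v` be the unit
vector of an index `j ∉ T`. Then `δ = 0`, `MAR = 1` and `√SNR = √K`, so the SNR bound holds with
equality. The correlations of the columns with `y = x + v` are the entries of `y`, which equal `1`
exactly on `T ∪ {j}`, so OMP may break the first tie in favour of `j`. A selected index is never
discarded, hence such a run cannot end with `T`.
-/

section Support

variable {n : ℕ}

theorem suppF_subset_iff {u : Vec n} {S : Finset (Fin n)} : suppF u ⊆ S ↔ ∀ i ∉ S, u i = 0 := by
  simp only [suppF, subset_iff, mem_filter_univ]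
  exact forall_congr' fun i => not_imp_comm

/-- The subspace of vectors of `ℝ^n` supported on `S`, over which OMP solves its least-squares
problem. -/
def coordSubspace (S : Finset (Fin n)) : Submodule ℝ (Vec n) where
  carrier := {u | ∀ i ∉ S, u i = 0}
  zero_mem' _ _ := rfl
  add_mem' hu hw i hi := by simp [hu i hi, hw i hi]
  smul_mem' a u hu i hi := by simp [hu i hi]

theorem mem_coordSubspace {u : Vec n} {S : Finset (Fin n)} :
    u ∈ coordSubspace S ↔ suppF u ⊆ S :=
  suppF_subset_iff.symm

end Support

section OMP

variable {m n N : ℕ}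

theorem exists_leastSquares (Φ : Matrix (Fin m) (Fin n) ℝ) (y : Vec m) (S : Finset (Fin n)) :
    ∃ c : Vec n, suppF c ⊆ S ∧
      ∀ u : Vec n, suppF u ⊆ S → ‖y - mulVec' Φ c‖ ≤ ‖y - mulVec' Φ u‖ := by
  let V : Submodule ℝ (Vec m) := (coordSubspace S).map (Matrix.toEuclideanLin Φ)
  obtain ⟨_, ⟨c, hc, rfl⟩, hdist⟩ :=
    V.closed_of_finiteDimensional.exists_infDist_eq_dist ⟨0, V.zero_mem⟩ y
  refine ⟨c, mem_coordSubspace.1 hc, fun u hu => ?_⟩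
  have hmem : Matrix.toEuclideanLin Φ u ∈ V := Submodule.mem_map_of_mem (mem_coordSubspace.2 hu)
  rw [← dist_eq_norm, ← dist_eq_norm]
  exact hdist.symm.trans_le (Metric.infDist_le_dist_of_mem hmem)

theorem exists_max_correlation (Φ : Matrix (Fin m) (Fin n) ℝ) (r : Vec m) {S : Finset (Fin n)}
    (hS : S ≠ univ) :
    ∃ t ∉ S, ∀ i ∉ S, |dot (col Φ i) r| ≤ |dot (col Φ t) r| := by
  have hne : Sᶜ.Nonempty := by rwa [nonempty_iff_ne_empty, Ne, compl_eq_empty_iff]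
  simpa only [mem_compl] using exists_max_image Sᶜ (fun i => |dot (col Φ i) r|) hne

/-- The index sets `T^k` produced by a selection rule `next`, which sends the set of indices
selected so far to the index selected next. -/
def selectedSets (next : Finset (Fin n) → Fin n) : ℕ → Finset (Fin n)
  | 0 => ∅
  | k + 1 => insert (next (selectedSets next k)) (selectedSets next k)

theorem card_selectedSets_le (next : Finset (Fin n) → Fin n) (k : ℕ) :
    #(selectedSets next k) ≤ k := by
  induction k with
  | zero => rfl
  | succ k ih => exact (card_insert_le ..).trans (Nat.succ_le_succ ih)

theorem selectedSets_ne_univ (next : Finset (Fin n) → Fin n) {k : ℕ} (hk : k < n) :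
    selectedSets next k ≠ univ := by
  intro h
  have hcard := card_selectedSets_le next k
  rw [h, card_fin] at hcard
  exact hcard.not_gt hk

variable {Φ : Matrix (Fin m) (Fin n) ℝ} {y : Vec m}

theorem exists_ompRun_idx_one_eq {j : Fin n}
    (hj : ∀ i, |dot (col Φ i) y| ≤ |dot (col Φ j) y|) (hN : N ≤ n) :
    ∃ run : OMPRun Φ y N, run.idx 1 = j := by
  choose est est_supp est_min using exists_leastSquares Φ y
  let res (S : Finset (Fin n)) : Vec m := y - mulVec' Φ (est S)
  have est_empty : est ∅ = 0 := PiLp.ext fun i => suppF_subset_iff.1 (est_supp ∅) i (notMem_empty i)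
  have res_empty : res ∅ = y := by ext; simp [res, est_empty, mulVec']
  have greedy (S : Finset (Fin n)) : ∃ t, (S = ∅ → t = j) ∧ (S ≠ univ → t ∉ S ∧
      ∀ i ∉ S, |dot (col Φ i) (res S)| ≤ |dot (col Φ t) (res S)|) := by
    by_cases hS : S = ∅
    · subst hS
      exact ⟨j, fun _ => rfl, fun _ => ⟨notMem_empty j, fun i _ => res_empty.symm ▸ hj i⟩⟩
    · by_cases hS' : S = univ
      · exact ⟨j, fun _ => rfl, fun h => (h hS').elim⟩
      · obtain ⟨t, ht⟩ := exists_max_correlation Φ (res S) hS'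
        exact ⟨t, fun h => (hS h).elim, fun _ => ht⟩
  choose next next_empty next_greedy using greedy
  have next_spec (k : ℕ) (hk : k < N) :=
    next_greedy _ (selectedSets_ne_univ next (hk.trans_le hN))
  exact ⟨{
    idx := fun k => next (selectedSets next (k - 1))
    sets := selectedSets next
    est := fun k => est (selectedSets next k)
    res := fun k => res (selectedSets next k)
    sets_zero := rfl
    est_zero := est_empty
    res_zero := res_empty
    idx_not_mem := fun k hk => (next_spec k hk).1
    idx_max := fun k hk => (next_spec k hk).2
    sets_succ := fun _ _ => rfl
    est_supp := fun _ _ => est_supp _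
    est_min := fun _ _ => est_min _
    res_succ := fun _ _ => rfl }, next_empty ∅ rfl⟩

theorem OMPRun.idx_mem_sets (run : OMPRun Φ y N) {k l : ℕ} (hkl : k < l) (hl : l ≤ N) :
    run.idx (k + 1) ∈ run.sets l := by
  induction l, hkl using Nat.le_induction with
  | base => exact run.sets_succ k hl ▸ mem_insert_self ..
  | succ l _ ih => exact run.sets_succ l hl ▸ mem_insert_of_mem (ih (Nat.le_of_succ_le hl))

end OMP

section Identity

variable {m n : ℕ}

theorem ripConst_zero_of_norm_mulVec' {Φ : Matrix (Fin m) (Fin n) ℝ}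
    (hΦ : ∀ u, ‖mulVec' Φ u‖ = ‖u‖) (L : ℕ) : RIPConst Φ L 0 :=
  ⟨⟨le_rfl, fun u _ => by simp [hΦ]⟩, fun _ hc => hc.1⟩

theorem mulVec'_one (u : Vec n) : mulVec' 1 u = u := by
  ext i
  simp [mulVec', Matrix.one_apply]

theorem dot_col_one (i : Fin n) (u : Vec n) : dot (col 1 i) u = u i := by
  simp [dot, col, Matrix.one_apply]

end Identity

section Indicator

variable {n : ℕ} (T : Finset (Fin n))

/-- The indicator vector of `T`: the signal with support `T` whose MAR attains its maximum `1`. -/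
def indicatorVec : Vec n := WithLp.toLp 2 fun i => if i ∈ T then 1 else 0

theorem indicatorVec_apply (i : Fin n) : indicatorVec T i = if i ∈ T then 1 else 0 := rfl

theorem suppF_indicatorVec : suppF (indicatorVec T) = T := by
  ext i
  simp [suppF, indicatorVec_apply]

theorem norm_indicatorVec_sq : ‖indicatorVec T‖ ^ 2 = #T := by
  simp [EuclideanSpace.norm_sq_eq, indicatorVec_apply, apply_ite]

theorem inf'_indicatorVec_sq (hT : T.Nonempty) :
    (T.inf' hT fun j => |indicatorVec T j| ^ 2) = 1 := by
  rw [inf'_congr hT rfl fun i hi => by rw [indicatorVec_apply, if_pos hi, abs_one, one_pow],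
    inf'_const]

theorem mar_indicatorVec (hT : T.Nonempty) :
    (T.inf' hT fun j => |indicatorVec T j| ^ 2) / (‖indicatorVec T‖ ^ 2 / #T) = 1 := by
  have hcard : (#T : ℝ) ≠ 0 := Nat.cast_ne_zero.2 hT.card_ne_zero
  rw [inf'_indicatorVec_sq, norm_indicatorVec_sq, div_self hcard, div_one]

theorem snr_one_indicatorVec_single (j : Fin n) :
    SNR 1 (indicatorVec T) (EuclideanSpace.single j 1) = #T := by
  rw [SNR, mulVec'_one, norm_indicatorVec_sq]
  simp

variable {T} {j : Fin n}

theorem indicatorVec_insert (hj : j ∉ T) :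
    indicatorVec (insert j T) = indicatorVec T + EuclideanSpace.single j 1 := by
  ext i
  by_cases hij : i = j <;> simp [indicatorVec_apply, hij, hj]

theorem abs_indicatorVec_le_of_mem (hj : j ∈ T) (i : Fin n) :
    |indicatorVec T i| ≤ |indicatorVec T j| := by
  rw [indicatorVec_apply, indicatorVec_apply, if_pos hj]
  split_ifs <;> simp

theorem exists_ompRun_one_idx_one_notMem {N : ℕ} (hj : j ∉ T) (hN : N ≤ n) :
    ∃ run : OMPRun 1 (indicatorVec T + EuclideanSpace.single j 1) N, run.idx 1 ∉ T := by
  have hmax (i : Fin n) : |dot (col 1 i) (indicatorVec T + EuclideanSpace.single j 1)| ≤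
      |dot (col 1 j) (indicatorVec T + EuclideanSpace.single j 1)| := by
    rw [dot_col_one, dot_col_one, ← indicatorVec_insert hj]
    exact abs_indicatorVec_le_of_mem (mem_insert_self j T) i
  obtain ⟨run, hrun⟩ := exists_ompRun_idx_one_eq hmax hN
  exact ⟨run, hrun.symm ▸ hj⟩

end Indicator

/-- necessity of the SNR bound: for every `K ≥ 1` and `m > K`
there is an instance satisfying the reversed SNR bound on which some run of
OMP picks a wrong index at the first iteration and fails exact recovery. -/
theorem stmt1 (K m : ℕ) (hK : 1 ≤ K) (hm : K < m) :
    ∃ (Φ : Matrix (Fin m) (Fin m) ℝ) (x v y : Vec m) (T : Finset (Fin m))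
      (hTne : T.Nonempty) (δ : ℝ),
      suppF x = T ∧ T.card = K ∧ v ≠ 0 ∧ y = mulVec' Φ x + v ∧
      RIPConst Φ (K + 1) δ ∧
      Real.sqrt (SNR Φ x v) ≤
        Real.sqrt K * (1 + δ) /
          ((1 - Real.sqrt K * δ) *
            Real.sqrt ((T.inf' hTne fun j => |x j| ^ 2) / (‖x‖ ^ 2 / K))) ∧
      ∃ run : OMPRun Φ y K, run.idx 1 ∉ T ∧ run.sets K ≠ T := by
  obtain ⟨T, -, hTcard⟩ : ∃ T ⊆ (univ : Finset (Fin m)), #T = K :=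
    exists_subset_card_eq (by simpa using hm.le)
  obtain ⟨j, -, hjT⟩ : ∃ j ∈ (univ : Finset (Fin m)), j ∉ T :=
    exists_mem_notMem_of_card_lt_card (by simpa [hTcard] using hm)
  have hTne : T.Nonempty := card_pos.1 (hTcard ▸ hK)
  have hv : EuclideanSpace.single j (1 : ℝ) ≠ 0 := by simp
  obtain ⟨run, hidx⟩ := exists_ompRun_one_idx_one_notMem hjT hm.le
  refine ⟨1, indicatorVec T, EuclideanSpace.single j 1, _, T, hTne, 0, suppF_indicatorVec T, hTcard,
    hv, by rw [mulVec'_one], ripConst_zero_of_norm_mulVec' (fun u => by rw [mulVec'_one]) _, ?_,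
    run, hidx, fun h => hidx (h.subset (run.idx_mem_sets hK le_rfl))⟩
  rw [snr_one_indicatorVec_single, ← hTcard, mar_indicatorVec]
  simp

end
end
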